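/- Let V ≥ 2 and D ≥ 1 be natural numbers and ρ > 0 a real number, and set γ = exp(−ρ·√(D·V/(V−1))). Then there exists u : Fin V → ℝ with ‖u‖₂ = ρ·√D such that H(softmax(u)) = log(1 + (V−1)·γ) + ρ·γ·√(D·V·(V−1)) / (1 + (V−1)·γ). Consequently the lower bound of the LM-head entropy theorem is attained on the sphere of radius ρ·√D. -/

import Mathlib

open Real Finset

/-!
Since softmax is invariant under adding a constant, the softmax entropy of a vector with one
coordinate `a` and all others `b` depends only on the gap `δ = a - b`. Among these vectors with gap
`δ` the centred one has the least norm, namely `δ √((V - 1) / V)`, so it lies on the sphere of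
radius `ρ √D` when `δ = ρ √(D V / (V - 1))`, that is, when `exp (-δ) = γ`.
-/

section SoftmaxEntropy

variable {ι : Type*} [Fintype ι]

/-- The softmax of a logit vector: the probability vector with weights proportional to
`exp (u i)`. -/
noncomputable def softmax (u : ι → ℝ) (i : ι) : ℝ :=
  exp (u i) / ∑ j, exp (u j)

/-- The Shannon entropy, in nats, of a probability vector; it is defined for every real vector,
with `0 * log 0 = 0`. -/
noncomputable def shannonEntropy (p : ι → ℝ) : ℝ :=
  -∑ i, p i * log (p i)

theorem sum_exp_pos [Nonempty ι] (u : ι → ℝ) : 0 < ∑ i, exp (u i) :=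
  sum_pos (fun i _ => exp_pos (u i)) univ_nonempty

theorem sum_softmax [Nonempty ι] (u : ι → ℝ) : ∑ i, softmax u i = 1 := by
  simp only [softmax]
  rw [← sum_div, div_self (sum_exp_pos u).ne']

theorem log_softmax (u : ι → ℝ) (i : ι) :
    log (softmax u i) = u i - log (∑ j, exp (u j)) := by
  have : Nonempty ι := ⟨i⟩
  rw [softmax, log_div (exp_ne_zero _) (sum_exp_pos u).ne', log_exp]

theorem shannonEntropy_softmax [Nonempty ι] (u : ι → ℝ) :
    shannonEntropy (softmax u) = log (∑ i, exp (u i)) - ∑ i, softmax u i * u i := by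
  simp only [shannonEntropy, log_softmax, mul_sub]
  rw [sum_sub_distrib, ← sum_mul, sum_softmax, one_mul, neg_sub]

end SoftmaxEntropy

section TwoLevel

variable {ι : Type*} [DecidableEq ι]

/-- The two-level vector with value `a` at the coordinate `k` and value `b` at all others. -/
def twoLevel {α : Type*} (k : ι) (a b : α) : ι → α :=
  Function.update (fun _ => b) k a

variable [Fintype ι]

theorem sum_comp_twoLevel {α R : Type*} [Ring R] (f : α → R) (k : ι) (a b : α) :
    ∑ i, f (twoLevel k a b i) = f a + ((Fintype.card ι : R) - 1) * f b := by
  have hcomp (i : ι) : f (twoLevel k a b i) = Function.update (fun _ => f b) k (f a) i :=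
    Function.apply_update (fun _ => f) _ k a i
  have hcard : ((univ \ {k} : Finset ι).card : R) = Fintype.card ι - 1 := by
    rw [cast_card_sdiff (subset_univ _), card_univ, card_singleton, Nat.cast_one]
  simp only [hcomp]
  rw [sum_update_of_mem (mem_univ k), sum_const, nsmul_eq_mul, hcard]

theorem sum_sq_twoLevel_centered (k : ι) (δ : ℝ) :
    ∑ i, twoLevel k (δ - δ / Fintype.card ι) (-(δ / Fintype.card ι)) i ^ 2 =
      δ ^ 2 * ((Fintype.card ι - 1) / Fintype.card ι) := by
  have : Nonempty ι := ⟨k⟩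
  have hcard : (Fintype.card ι : ℝ) ≠ 0 := Nat.cast_ne_zero.mpr Fintype.card_ne_zero
  rw [sum_comp_twoLevel (· ^ 2)]
  field_simp
  ring

theorem sum_exp_twoLevel (k : ι) (a b : ℝ) :
    ∑ i, exp (twoLevel k a b i) = exp a * (1 + (Fintype.card ι - 1) * exp (-(a - b))) := by
  rw [sum_comp_twoLevel exp, neg_sub, exp_sub]
  field_simp

theorem one_add_card_sub_one_mul_exp_pos (ι : Type*) [Fintype ι] [Nonempty ι] (x : ℝ) :
    0 < 1 + ((Fintype.card ι : ℝ) - 1) * exp x := by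
  have hcard : 0 ≤ (Fintype.card ι : ℝ) - 1 :=
    sub_nonneg.mpr (Nat.one_le_cast.mpr Fintype.card_pos)
  exact add_pos_of_pos_of_nonneg one_pos (mul_nonneg hcard (exp_pos x).le)

theorem sum_softmax_mul_twoLevel (k : ι) (a b : ℝ) :
    ∑ i, softmax (twoLevel k a b) i * twoLevel k a b i =
      a - (Fintype.card ι - 1) * (a - b) * exp (-(a - b)) /
        (1 + (Fintype.card ι - 1) * exp (-(a - b))) := by
  have : Nonempty ι := ⟨k⟩
  have hW := (one_add_card_sub_one_mul_exp_pos ι (-(a - b))).ne'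
  have hb : exp b = exp a * exp (-(a - b)) := by rw [← exp_add]; ring_nf
  simp only [softmax]
  rw [sum_comp_twoLevel (fun x => exp x / (∑ j, exp (twoLevel k a b j)) * x), sum_exp_twoLevel, hb]
  field_simp
  ring

theorem shannonEntropy_softmax_twoLevel (k : ι) (a b : ℝ) :
    shannonEntropy (softmax (twoLevel k a b)) =
      log (1 + (Fintype.card ι - 1) * exp (-(a - b))) +
        (Fintype.card ι - 1) * (a - b) * exp (-(a - b)) /
          (1 + (Fintype.card ι - 1) * exp (-(a - b))) := by
  have : Nonempty ι := ⟨k⟩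
  rw [shannonEntropy_softmax, sum_softmax_mul_twoLevel, sum_exp_twoLevel,
    log_mul (exp_ne_zero a) (one_add_card_sub_one_mul_exp_pos ι _).ne', log_exp]
  ring

end TwoLevel

/-- Sharpness of Theorem 4.2: the entropy lower bound is attained by some
logit vector on the sphere of radius `ρ√D`. -/
theorem entropy_lower_bound_attained (V D : ℕ) (hV : 2 ≤ V) (hD : 1 ≤ D)
    (ρ : ℝ) (hρ : 0 < ρ) :
    ∃ u : Fin V → ℝ,
      Real.sqrt (∑ i, u i ^ 2) = ρ * Real.sqrt D ∧
      -(∑ i, (Real.exp (u i) / ∑ j, Real.exp (u j)) *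
          Real.log (Real.exp (u i) / ∑ j, Real.exp (u j))) =
        Real.log (1 + ((V : ℝ) - 1) *
            Real.exp (-ρ * Real.sqrt ((D : ℝ) * V / ((V : ℝ) - 1)))) +
          ρ * Real.exp (-ρ * Real.sqrt ((D : ℝ) * V / ((V : ℝ) - 1))) *
            Real.sqrt ((D : ℝ) * V * ((V : ℝ) - 1)) /
            (1 + ((V : ℝ) - 1) *
              Real.exp (-ρ * Real.sqrt ((D : ℝ) * V / ((V : ℝ) - 1)))) := by
  have hV1 : (0 : ℝ) < V - 1 := sub_pos.mpr (Nat.one_lt_cast.mpr hV)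
  have hV0 : (V : ℝ) ≠ 0 := Nat.cast_ne_zero.mpr (by lia)
  let k : Fin V := ⟨0, by lia⟩
  let δ := ρ * √(D * V / (V - 1))
  have hradius : δ ^ 2 * ((V - 1) / V) = ρ ^ 2 * D := by
    rw [mul_pow, sq_sqrt (by positivity)]
    field_simp [hV0]
  have hsqrt : √(D * V * (V - 1)) = (V - 1) * √(D * V / (V - 1)) := by
    rw [show (D * V * (V - 1) : ℝ) = (V - 1) ^ 2 * (D * V / (V - 1)) by field_simp,
      sqrt_mul (sq_nonneg _), sqrt_sq hV1.le]
  refine ⟨twoLevel k (δ - δ / V) (-(δ / V)), ?_, ?_⟩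
  · have hsum := sum_sq_twoLevel_centered k δ
    rw [Fintype.card_fin, hradius] at hsum
    rw [hsum, sqrt_mul (sq_nonneg ρ), sqrt_sq hρ.le]
  · have hgap : δ - δ / V - -(δ / V) = δ := by ring
    refine (shannonEntropy_softmax_twoLevel _ _ _).trans ?_
    rw [Fintype.card_fin, hgap, hsqrt, neg_mul]
    ring
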